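/- Suppose Assumption 1 holds with a_{i1} = i − 1 for all i ≥ 1. Then there exists w < ∞ such that κ(ε) = μ(I − e^{−α}P̃)^{−1} r + ε e^{−2α} μ P̃ (I − e^{−α}P̃)^{−2} P̃⁽¹⁾ (I − e^{−α}P̃)^{−1} r + O(ε²(log(1/ε))^w) as ε↓0. -/

import Mathlib

open Matrix Topology Filter

/-- The matrix norm ‖A‖ = max_x Σ_y |A(x,y)|. -/
noncomputable def matNorm {T : Type*} [Fintype T] (A : Matrix T T ℝ) : ℝ :=
  ⨆ x, ∑ y, |A x y|

/-- A square matrix is stochastic if all entries are nonnegative and every row sums to 1. -/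
def IsStochastic {T : Type*} [Fintype T] (P : Matrix T T ℝ) : Prop :=
  (∀ x y, 0 ≤ P x y) ∧ ∀ x, ∑ y, P x y = 1

/-- The ordered product P 1 * P 2 * ⋯ * P j. -/
noncomputable def prodP {T : Type*} [Fintype T] [DecidableEq T]
    (P : ℕ → Matrix T T ℝ) (j : ℕ) : Matrix T T ℝ :=
  ((List.range j).map fun i => P (i + 1)).prod

/-- The expected infinite-horizon discounted reward
κ = Σ_{j=0}^∞ e^{−αj} μ (P₁⋯P_j) r. -/
noncomputable def kappa {S : Type*} [Fintype S] [DecidableEq S]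
    (α : ℝ) (μ r : S → ℝ) (P : ℕ → Matrix S S ℝ) : ℝ :=
  ∑' j : ℕ, Real.exp (-α * j) * (μ ⬝ᵥ (prodP P j *ᵥ r))

/-!
By the Bellman recursion, a sequence `g` that satisfies `g j = r + β P_{j+1} g (j + 1)` up to an
error `K` for the first `N` steps has `g 0` within `O(K + β ^ N)` of the discounted reward-to-go.
For the linear drift `P_{j+1} ≈ Pt + ε j Pt1`, the linearization in `ε` of this recursion is solved
by an explicit correction affine in `j`, which leaves an error of order `ε ^ 2`, up to powers of the
truncation time `N`. With `N ≈ (log (1 / ε)) ^ (1 + δ)`, `β ^ N = O(ε ^ 2)` and powers of `N` are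
only powers of `log (1 / ε)`.
-/

section Norms

open scoped Matrix.Norms.Operator

variable {T : Type*} [Fintype T]

lemma matNorm_eq_norm (A : Matrix T T ℝ) : matNorm A = ‖A‖ := by
  rw [linfty_opNorm_def, Finset.sup_univ_eq_ciSup, NNReal.coe_iSup]
  simp only [matNorm, NNReal.coe_sum, coe_nnnorm, Real.norm_eq_abs]

lemma IsStochastic.matNorm_le_one {P : Matrix T T ℝ} (hP : IsStochastic P) : matNorm P ≤ 1 := by
  refine Real.iSup_le (fun x => ?_) zero_le_one
  simp only [abs_of_nonneg (hP.1 x _), hP.2 x, le_refl]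

lemma norm_mulVec_le_of_norm_le_one {A : Matrix T T ℝ} (hA : ‖A‖ ≤ 1) (v : T → ℝ) :
    ‖A *ᵥ v‖ ≤ ‖v‖ :=
  (linfty_opNorm_mulVec A v).trans (mul_le_of_le_one_left (norm_nonneg v) hA)

lemma abs_dotProduct_le_sum_abs_mul_norm (μ v : T → ℝ) : |μ ⬝ᵥ v| ≤ (∑ x, |μ x|) * ‖v‖ := by
  rw [Finset.sum_mul]
  refine (Finset.abs_sum_le_sum_abs _ _).trans (Finset.sum_le_sum fun x _ => ?_)
  rw [abs_mul]
  exact mul_le_mul_of_nonneg_left (norm_le_pi_norm v x) (abs_nonneg _)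

variable [DecidableEq T]

lemma prodP_succ_left (P : ℕ → Matrix T T ℝ) (j : ℕ) :
    prodP P (j + 1) = P 1 * prodP (fun k => P (k + 1)) j := by
  simp only [prodP, List.range_succ_eq_map, List.map_cons, List.prod_cons, List.map_map,
    Function.comp_def, zero_add, Nat.succ_eq_add_one]

lemma norm_prodP_mulVec_le {P : ℕ → Matrix T T ℝ} (hP : ∀ k, 1 ≤ k → ‖P k‖ ≤ 1) (j : ℕ)
    (v : T → ℝ) : ‖prodP P j *ᵥ v‖ ≤ ‖v‖ := by
  induction j generalizing P with
  | zero => simp [prodP]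
  | succ j ih =>
    rw [prodP_succ_left, ← mulVec_mulVec]
    exact (norm_mulVec_le_of_norm_le_one (hP 1 le_rfl) _).trans
      (ih fun k _ => hP (k + 1) (by omega))

/-- The expected discounted reward `∑ⱼ βʲ P₁⋯Pⱼ r` as a function of the initial state, so that
`kappa α μ r P` is its `μ`-average for `β = exp (-α)`. -/
noncomputable def discountedReward (β : ℝ) (P : ℕ → Matrix T T ℝ) (r : T → ℝ) : T → ℝ :=
  ∑' j : ℕ, β ^ j • (prodP P j *ᵥ r)

section DiscountedReward

variable {β : ℝ} {P : ℕ → Matrix T T ℝ}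

lemma norm_pow_smul_prodP_mulVec_le (hβ0 : 0 ≤ β) (hP : ∀ k, 1 ≤ k → ‖P k‖ ≤ 1) (r : T → ℝ)
    (j : ℕ) : ‖β ^ j • (prodP P j *ᵥ r)‖ ≤ β ^ j * ‖r‖ := by
  rw [norm_smul, Real.norm_of_nonneg (pow_nonneg hβ0 j)]
  exact mul_le_mul_of_nonneg_left (norm_prodP_mulVec_le hP j r) (pow_nonneg hβ0 j)

lemma summable_discountedReward (hβ0 : 0 ≤ β) (hβ1 : β < 1) (hP : ∀ k, 1 ≤ k → ‖P k‖ ≤ 1)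
    (r : T → ℝ) : Summable fun j : ℕ => β ^ j • (prodP P j *ᵥ r) :=
  .of_norm_bounded ((summable_geometric_of_lt_one hβ0 hβ1).mul_right ‖r‖)
    (norm_pow_smul_prodP_mulVec_le hβ0 hP r)

lemma norm_discountedReward_le (hβ0 : 0 ≤ β) (hβ1 : β < 1) (hP : ∀ k, 1 ≤ k → ‖P k‖ ≤ 1)
    (r : T → ℝ) : ‖discountedReward β P r‖ ≤ ‖r‖ / (1 - β) := by
  rw [div_eq_inv_mul]
  exact tsum_of_norm_bounded ((hasSum_geometric_of_lt_one hβ0 hβ1).mul_right ‖r‖)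
    (norm_pow_smul_prodP_mulVec_le hβ0 hP r)

lemma discountedReward_bellman (hβ0 : 0 ≤ β) (hβ1 : β < 1) (hP : ∀ k, 1 ≤ k → ‖P k‖ ≤ 1)
    (r : T → ℝ) :
    discountedReward β P r =
      r + β • (P 1 *ᵥ discountedReward β (fun k => P (k + 1)) r) := by
  have hshift : Summable fun j : ℕ => β ^ j • (prodP (fun k => P (k + 1)) j *ᵥ r) :=
    summable_discountedReward hβ0 hβ1 (fun k _ => hP (k + 1) (by omega)) r
  have hsucc : ∀ j : ℕ, β ^ (j + 1) • (prodP P (j + 1) *ᵥ r) =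
      β • (P 1 *ᵥ (β ^ j • (prodP (fun k => P (k + 1)) j *ᵥ r))) := fun j => by
    rw [prodP_succ_left, ← mulVec_mulVec, mulVec_smul, smul_smul, pow_succ']
  have hmap : HasSum (fun j : ℕ => P 1 *ᵥ (β ^ j • (prodP (fun k => P (k + 1)) j *ᵥ r)))
      (P 1 *ᵥ discountedReward β (fun k => P (k + 1)) r) :=
    hshift.hasSum.map (P 1).mulVecLin (continuous_const.matrix_mulVec continuous_id)
  rw [discountedReward, (summable_discountedReward hβ0 hβ1 hP r).tsum_eq_zero_add]
  simp only [hsucc, (hmap.const_smul β).tsum_eq]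
  simp [prodP]

lemma kappa_eq_dotProduct_discountedReward {α : ℝ} (hα : 0 < α) (hP : ∀ k, 1 ≤ k → ‖P k‖ ≤ 1)
    (μ r : T → ℝ) : kappa α μ r P = μ ⬝ᵥ discountedReward (Real.exp (-α)) P r := by
  have hmap : HasSum (fun j : ℕ => μ ⬝ᵥ (Real.exp (-α) ^ j • (prodP P j *ᵥ r)))
      (μ ⬝ᵥ discountedReward (Real.exp (-α)) P r) :=
    (summable_discountedReward (Real.exp_pos _).le (Real.exp_lt_one_iff.mpr (neg_neg_of_pos hα))
      hP r).hasSum.map (dotProductBilin ℝ ℝ μ) (continuous_const.dotProduct continuous_id)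
  rw [kappa, ← hmap.tsum_eq]
  refine tsum_congr fun j => ?_
  rw [dotProduct_smul, smul_eq_mul, ← Real.exp_nat_mul, mul_comm (j : ℝ)]

lemma norm_discountedReward_sub_le {r : T → ℝ} {g : ℕ → T → ℝ} {N : ℕ} {K : ℝ} (hβ0 : 0 ≤ β)
    (hβ1 : β < 1) (hP : ∀ k, 1 ≤ k → ‖P k‖ ≤ 1) (hK : 0 ≤ K)
    (hg : ∀ j < N, ‖r - (g j - β • (P (j + 1) *ᵥ g (j + 1)))‖ ≤ K) :
    ‖discountedReward β P r - g 0‖ ≤ K / (1 - β) + β ^ N * (‖r‖ / (1 - β) + ‖g N‖) := by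
  have hβ : 0 < 1 - β := sub_pos.mpr hβ1
  induction N generalizing P g with
  | zero =>
    have hV := norm_discountedReward_le hβ0 hβ1 hP r
    have hKβ : 0 ≤ K / (1 - β) := by positivity
    rw [pow_zero, one_mul]
    linarith [norm_sub_le (discountedReward β P r) (g 0)]
  | succ N ih =>
    set d := discountedReward β (fun k => P (k + 1)) r - g 1 with hd
    have hdecomp : discountedReward β P r - g 0 =
        (r - (g 0 - β • (P 1 *ᵥ g 1))) + β • (P 1 *ᵥ d) := by
      rw [discountedReward_bellman hβ0 hβ1 hP, hd, mulVec_sub, smul_sub]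
      abel
    calc ‖discountedReward β P r - g 0‖
        ≤ K + β * ‖d‖ := by
          rw [hdecomp]
          refine (norm_add_le _ _).trans (add_le_add (hg 0 N.succ_pos) ?_)
          rw [norm_smul, Real.norm_of_nonneg hβ0]
          exact mul_le_mul_of_nonneg_left (norm_mulVec_le_of_norm_le_one (hP 1 le_rfl) d) hβ0
      _ ≤ K + β * (K / (1 - β) + β ^ N * (‖r‖ / (1 - β) + ‖g (N + 1)‖)) := by
          gcongr
          exact ih (g := fun j => g (j + 1)) (fun k _ => hP (k + 1) (by omega))
            fun j hj => hg (j + 1) (by omega)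
      _ = K / (1 - β) + β ^ (N + 1) * (‖r‖ / (1 - β) + ‖g (N + 1)‖) := by
          field_simp
          ring

end DiscountedReward

/-- The potential (resolvent) `(I - β A)⁻¹ = ∑ⱼ βʲ Aʲ` of `A` at discount factor `β`; the junk
value of the inverse is excluded by `isUnit_one_sub_smul`. -/
noncomputable def potential (β : ℝ) (A : Matrix T T ℝ) : Matrix T T ℝ :=
  (1 - β • A)⁻¹

section FirstOrder

variable {β : ℝ} {Pt : Matrix T T ℝ}

lemma isUnit_one_sub_smul (hβ0 : 0 ≤ β) (hβ1 : β < 1) (hPt : ‖Pt‖ ≤ 1) :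
    IsUnit (1 - β • Pt) := by
  refine isUnit_one_sub_of_norm_lt_one ?_
  rw [norm_smul, Real.norm_of_nonneg hβ0]
  exact (mul_le_of_le_one_right hβ0 hPt).trans_lt hβ1

lemma potential_commute (β : ℝ) (Pt : Matrix T T ℝ) : Commute (potential β Pt) Pt := by
  have h : Commute (1 - β • Pt) Pt :=
    (Commute.one_left Pt).sub_left ((Commute.refl Pt).smul_left β)
  rw [potential, ← Matrix.zpow_neg_one]
  exact Matrix.Commute.zpow_left h (-1)

lemma potential_mulVec_eq (hPt : IsUnit (1 - β • Pt)) (v : T → ℝ) :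
    potential β Pt *ᵥ v = v + β • (Pt *ᵥ (potential β Pt *ᵥ v)) := by
  have h : (1 - β • Pt) *ᵥ (potential β Pt *ᵥ v) = v := by
    rw [mulVec_mulVec, potential, mul_nonsing_inv _ ((isUnit_iff_isUnit_det _).mp hPt),
      one_mulVec]
  rw [sub_mulVec, one_mulVec, smul_mulVec] at h
  exact sub_eq_iff_eq_add.mp h

variable (β Pt) (Pt1 : Matrix T T ℝ) (r : T → ℝ)

/-- The coefficient of `j` in `driftCorrection`. -/
noncomputable def driftSlope : T → ℝ :=
  potential β Pt *ᵥ (β • (Pt1 *ᵥ (potential β Pt *ᵥ r)))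

/-- The derivative at `ε = 0` of the discounted reward collected from time `j` onwards, when the
transition matrix at time `i` is `Pt + (ε (i - 1)) Pt1`. It is found by solving the linearized
Bellman recursion `driftCorrection_eq` with an ansatz affine in `j`. -/
noncomputable def driftCorrection (j : ℕ) : T → ℝ :=
  (j : ℝ) • driftSlope β Pt Pt1 r + potential β Pt *ᵥ (β • (Pt *ᵥ driftSlope β Pt Pt1 r))

/-- The first-order approximation in `ε` of the discounted reward collected from time `j`
onwards. -/
noncomputable def driftValue (ε : ℝ) (j : ℕ) : T → ℝ :=
  potential β Pt *ᵥ r + ε • driftCorrection β Pt Pt1 r j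

lemma dotProduct_driftValue_zero (μ : T → ℝ) (ε : ℝ) :
    μ ⬝ᵥ driftValue β Pt Pt1 r ε 0 =
      μ ⬝ᵥ (potential β Pt *ᵥ r) + ε * β ^ 2 *
        (μ ⬝ᵥ ((Pt * potential β Pt ^ 2 * Pt1 * potential β Pt) *ᵥ r)) := by
  have hmul : potential β Pt * (Pt * (potential β Pt * (Pt1 * potential β Pt))) =
      Pt * potential β Pt ^ 2 * Pt1 * potential β Pt := by
    simp only [← mul_assoc, (potential_commute β Pt).eq, pow_two]
  simp only [driftValue, driftCorrection, driftSlope, Nat.cast_zero, mulVec_smul, mulVec_mulVec,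
    smul_smul, hmul, dotProduct_add, dotProduct_smul, smul_eq_mul]
  ring

variable {β Pt}

lemma driftCorrection_eq (hPt : IsUnit (1 - β • Pt)) (j : ℕ) :
    driftCorrection β Pt Pt1 r j =
      β • (Pt *ᵥ driftCorrection β Pt Pt1 r (j + 1) +
        (j : ℝ) • (Pt1 *ᵥ (potential β Pt *ᵥ r))) := by
  have hslope : driftSlope β Pt Pt1 r =
      β • (Pt1 *ᵥ (potential β Pt *ᵥ r)) + β • (Pt *ᵥ driftSlope β Pt Pt1 r) :=
    potential_mulVec_eq hPt _
  have hintercept := potential_mulVec_eq hPt (β • (Pt *ᵥ driftSlope β Pt Pt1 r))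
  simp only [driftCorrection, mulVec_add, mulVec_smul, smul_add, Nat.cast_add, Nat.cast_one,
    add_smul, one_smul] at hintercept ⊢
  nth_rewrite 1 [hslope, hintercept]
  module

lemma sub_bellman_driftValue (hPt : IsUnit (1 - β • Pt)) (Q : Matrix T T ℝ) (ε : ℝ) (j : ℕ) :
    r - (driftValue β Pt Pt1 r ε j - β • (Q *ᵥ driftValue β Pt Pt1 r ε (j + 1))) =
      β • ((Q - (Pt + (ε * j) • Pt1)) *ᵥ driftValue β Pt Pt1 r ε (j + 1) +
        (ε ^ 2 * j) • (Pt1 *ᵥ driftCorrection β Pt Pt1 r (j + 1))) := by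
  have hU := potential_mulVec_eq hPt r
  have hW := driftCorrection_eq Pt1 r hPt j
  simp only [driftValue, sub_mulVec, add_mulVec, smul_mulVec, mulVec_add, mulVec_smul]
  nth_rewrite 1 [hU, hW]
  module

lemma exists_norm_driftCorrection_driftValue_le :
    ∃ D ≥ 0, ∀ m : ℝ, 1 ≤ m → ∀ k : ℕ, (k : ℝ) ≤ m →
      ‖driftCorrection β Pt Pt1 r k‖ ≤ D * m ∧
        ∀ ε : ℝ, 0 ≤ ε → ε ≤ 1 → ‖driftValue β Pt Pt1 r ε k‖ ≤ D * m := by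
  set U := potential β Pt *ᵥ r
  set A := driftSlope β Pt Pt1 r
  set B := potential β Pt *ᵥ (β • (Pt *ᵥ A))
  refine ⟨‖U‖ + (‖A‖ + ‖B‖), by positivity, fun m hm k hk => ?_⟩
  have hW : ‖driftCorrection β Pt Pt1 r k‖ ≤ (‖A‖ + ‖B‖) * m := by
    calc ‖(k : ℝ) • A + B‖ ≤ k * ‖A‖ + ‖B‖ := by
          simpa only [norm_smul, Real.norm_natCast] using norm_add_le ((k : ℝ) • A) B
      _ ≤ m * ‖A‖ + m * ‖B‖ := by
          gcongr
          exact le_mul_of_one_le_left (norm_nonneg B) hm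
      _ = (‖A‖ + ‖B‖) * m := by ring
  have hU : ‖U‖ ≤ ‖U‖ * m := le_mul_of_one_le_right (norm_nonneg U) hm
  refine ⟨by linarith [norm_nonneg U], fun ε hε0 hε1 => ?_⟩
  calc ‖U + ε • driftCorrection β Pt Pt1 r k‖
      ≤ ‖U‖ + ε * ‖driftCorrection β Pt Pt1 r k‖ := by
        simpa only [norm_smul, Real.norm_of_nonneg hε0] using
          norm_add_le U (ε • driftCorrection β Pt Pt1 r k)
    _ ≤ ‖U‖ + ‖driftCorrection β Pt Pt1 r k‖ := by
        gcongr
        exact mul_le_of_le_one_left (norm_nonneg _) hε1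
    _ ≤ (‖U‖ + (‖A‖ + ‖B‖)) * m := by linarith

lemma norm_sub_bellman_driftValue_le (hβ0 : 0 ≤ β) (hβ1 : β ≤ 1) (hPt : IsUnit (1 - β • Pt))
    {Q : Matrix T T ℝ} {ε m η D : ℝ} {j : ℕ} (hjm : (j : ℝ) ≤ m)
    (hQ : ‖Q - (Pt + (ε * j) • Pt1)‖ ≤ η)
    (hW : ‖driftCorrection β Pt Pt1 r (j + 1)‖ ≤ D * m)
    (hg : ‖driftValue β Pt Pt1 r ε (j + 1)‖ ≤ D * m) :
    ‖r - (driftValue β Pt Pt1 r ε j - β • (Q *ᵥ driftValue β Pt Pt1 r ε (j + 1)))‖ ≤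
      D * (η * m + ‖Pt1‖ * (ε ^ 2 * m ^ 2)) := by
  have hη : 0 ≤ η := (norm_nonneg _).trans hQ
  have hm : 0 ≤ m := j.cast_nonneg.trans hjm
  rw [sub_bellman_driftValue Pt1 r hPt, norm_smul, Real.norm_of_nonneg hβ0]
  refine (mul_le_of_le_one_left (norm_nonneg _) hβ1).trans ((norm_add_le _ _).trans ?_)
  calc _ ≤ η * (D * m) + ε ^ 2 * m * (‖Pt1‖ * (D * m)) := by
        rw [norm_smul, Real.norm_of_nonneg (by positivity : 0 ≤ ε ^ 2 * (j : ℝ))]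
        gcongr
        · exact (linfty_opNorm_mulVec _ _).trans (by gcongr)
        · exact (linfty_opNorm_mulVec _ _).trans (by gcongr)
    _ = D * (η * m + ‖Pt1‖ * (ε ^ 2 * m ^ 2)) := by ring

theorem exists_norm_discountedReward_sub_driftValue_le (hβ0 : 0 ≤ β) (hβ1 : β < 1)
    (hPt : ‖Pt‖ ≤ 1) :
    ∃ E ≥ 0, ∀ (P : ℕ → Matrix T T ℝ) (ε m η : ℝ), (∀ k, 1 ≤ k → ‖P k‖ ≤ 1) → 0 ≤ ε → ε ≤ 1 →
      1 ≤ m → (∀ i : ℕ, 1 ≤ i → (i : ℝ) ≤ m →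
        ‖P i - (Pt + (ε * ((i : ℝ) - 1)) • Pt1)‖ ≤ η) →
      ‖discountedReward β P r - driftValue β Pt Pt1 r ε 0‖ ≤
        E * (η * m + ε ^ 2 * m ^ 2 + β ^ ⌊m⌋₊ * m) := by
  have : 0 < 1 - β := sub_pos.mpr hβ1
  have hunit := isUnit_one_sub_smul hβ0 hβ1 hPt
  obtain ⟨D, hD, hbound⟩ :=
    exists_norm_driftCorrection_driftValue_le (β := β) (Pt := Pt) Pt1 r
  set E := D * (1 + ‖Pt1‖) / (1 - β) + (‖r‖ / (1 - β) + D)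
  refine ⟨E, by positivity, fun P ε m η hP hε0 hε1 hm hPη => ?_⟩
  have hη : 0 ≤ η := (norm_nonneg _).trans (hPη 1 le_rfl (by simpa only [Nat.cast_one] using hm))
  have hfloor : (⌊m⌋₊ : ℝ) ≤ m := Nat.floor_le (by positivity)
  have hresidual : ∀ j < ⌊m⌋₊,
      ‖r - (driftValue β Pt Pt1 r ε j - β • (P (j + 1) *ᵥ driftValue β Pt Pt1 r ε (j + 1)))‖ ≤
        D * (η * m + ‖Pt1‖ * (ε ^ 2 * m ^ 2)) := fun j hj => by
    have hj1 : ((j + 1 : ℕ) : ℝ) ≤ m := (Nat.cast_le.mpr hj).trans hfloor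
    have hjm : (j : ℝ) ≤ m := (Nat.cast_le.mpr j.le_succ).trans hj1
    obtain ⟨hW, hg⟩ := hbound m hm (j + 1) hj1
    refine norm_sub_bellman_driftValue_le Pt1 r hβ0 hβ1.le hunit hjm ?_ hW (hg ε hε0 hε1)
    simpa only [Nat.cast_add, Nat.cast_one, add_sub_cancel_right] using hPη (j + 1) (by omega) hj1
  calc _ ≤ D * (η * m + ‖Pt1‖ * (ε ^ 2 * m ^ 2)) / (1 - β) +
          β ^ ⌊m⌋₊ * (‖r‖ / (1 - β) + ‖driftValue β Pt Pt1 r ε ⌊m⌋₊‖) :=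
        norm_discountedReward_sub_le hβ0 hβ1 hP (by positivity) hresidual
    _ ≤ D * ((1 + ‖Pt1‖) * (η * m + ε ^ 2 * m ^ 2)) / (1 - β) +
          β ^ ⌊m⌋₊ * (‖r‖ / (1 - β) * m + D * m) := by
        gcongr
        · nlinarith [mul_nonneg (norm_nonneg Pt1) (mul_nonneg hη (zero_le_one.trans hm)),
            mul_nonneg (sq_nonneg ε) (sq_nonneg m)]
        · exact le_mul_of_one_le_right (by positivity) hm
        · exact (hbound m hm _ hfloor).2 ε hε0 hε1
    _ = D * (1 + ‖Pt1‖) / (1 - β) * (η * m + ε ^ 2 * m ^ 2) +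
          (‖r‖ / (1 - β) + D) * (β ^ ⌊m⌋₊ * m) := by ring
    _ ≤ E * (η * m + ε ^ 2 * m ^ 2) + E * (β ^ ⌊m⌋₊ * m) := by
        gcongr
        · exact le_add_of_nonneg_right (by positivity)
        · exact le_add_of_nonneg_left (by positivity)
    _ = E * (η * m + ε ^ 2 * m ^ 2 + β ^ ⌊m⌋₊ * m) := by ring

theorem exists_abs_kappa_sub_driftValue_le {α : ℝ} (hα : 0 < α) (hPt : ‖Pt‖ ≤ 1) (μ : T → ℝ) :
    ∃ D ≥ 0, ∀ (P : ℕ → Matrix T T ℝ) (ε m η : ℝ), (∀ k, 1 ≤ k → ‖P k‖ ≤ 1) → 0 ≤ ε → ε ≤ 1 →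
      1 ≤ m → (∀ i : ℕ, 1 ≤ i → (i : ℝ) ≤ m →
        ‖P i - (Pt + (ε * ((i : ℝ) - 1)) • Pt1)‖ ≤ η) →
      |kappa α μ r P - μ ⬝ᵥ driftValue (Real.exp (-α)) Pt Pt1 r ε 0| ≤
        D * (η * m + ε ^ 2 * m ^ 2 + Real.exp (-α) ^ ⌊m⌋₊ * m) := by
  obtain ⟨E, hE, hV⟩ := exists_norm_discountedReward_sub_driftValue_le Pt1 r
    (Real.exp_pos (-α)).le (Real.exp_lt_one_iff.mpr (neg_neg_of_pos hα)) hPt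
  refine ⟨(∑ x, |μ x|) * E, by positivity, fun P ε m η hP hε0 hε1 hm hPη => ?_⟩
  rw [kappa_eq_dotProduct_discountedReward hα hP, ← dotProduct_sub, mul_assoc]
  refine (abs_dotProduct_le_sum_abs_mul_norm _ _).trans ?_
  gcongr
  exact hV P ε m η hP hε0 hε1 hm hPη

end FirstOrder

end Norms

section Asymptotics

lemma tendsto_log_one_div_nhdsGT_zero :
    Tendsto (fun ε : ℝ => Real.log (1 / ε)) (𝓝[>] 0) atTop := by
  simpa only [one_div, Function.comp_def] using
    Real.tendsto_log_atTop.comp tendsto_inv_nhdsGT_zero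

lemma tendsto_sq_mul_log_one_div_rpow_nhdsGT_zero (s : ℝ) :
    Tendsto (fun ε : ℝ => ε ^ 2 * Real.log (1 / ε) ^ s) (𝓝[>] 0) (𝓝 0) := by
  refine ((tendsto_rpow_mul_exp_neg_mul_atTop_nhds_zero s 2 two_pos).comp
    tendsto_log_one_div_nhdsGT_zero).congr' ?_
  filter_upwards [self_mem_nhdsWithin] with ε hε
  have hexp : Real.exp (-2 * Real.log (1 / ε)) = ε ^ 2 := by
    rw [one_div, Real.log_inv, neg_mul_neg, ← Nat.cast_two, Real.exp_nat_mul, Real.exp_log hε]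
  rw [Function.comp_apply, hexp, mul_comm]

lemma eventually_exp_neg_pow_floor_le {α δ : ℝ} (hα : 0 < α) (hδ : 0 < δ) :
    ∀ᶠ ε in 𝓝[>] (0 : ℝ),
      Real.exp (-α) ^ ⌊Real.log (1 / ε) ^ (1 + δ)⌋₊ ≤ Real.exp α * ε ^ 2 := by
  have hpow : ∀ᶠ L : ℝ in atTop, 2 / α ≤ L ^ δ :=
    (tendsto_rpow_atTop hδ).eventually_ge_atTop _
  filter_upwards [self_mem_nhdsWithin,
    tendsto_log_one_div_nhdsGT_zero.eventually (hpow.and (eventually_gt_atTop 0))]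
    with ε hε ⟨hLδ, hL⟩
  set L := Real.log (1 / ε) with hLdef
  have hεL : ε = Real.exp (-L) := by
    rw [hLdef, one_div, Real.log_inv, neg_neg, Real.exp_log hε]
  have hfloor := Nat.lt_floor_add_one (L ^ (1 + δ))
  have hwindow : 2 * L ≤ α * L ^ (1 + δ) := by
    rw [Real.rpow_add hL, Real.rpow_one]
    nlinarith [(div_le_iff₀' hα).mp hLδ]
  rw [hεL, ← Real.exp_nat_mul, ← Real.exp_nat_mul, ← Real.exp_add, Real.exp_le_exp]
  push_cast
  nlinarith

lemma norm_le_of_eventually_norm_sub_le {E : Type*} [SeminormedAddCommGroup E] {f : ℝ → E} {x : E}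
    {b c s : ℝ} (hf : ∀ ε, 0 < ε → ‖f ε‖ ≤ b)
    (hx : ∀ᶠ ε in 𝓝[>] (0 : ℝ), ‖f ε - x‖ ≤ c * ε ^ 2 * Real.log (1 / ε) ^ s) : ‖x‖ ≤ b := by
  have hbound : Tendsto (fun ε : ℝ => c * ε ^ 2 * Real.log (1 / ε) ^ s) (𝓝[>] 0) (𝓝 0) := by
    simpa only [mul_assoc, mul_zero] using
      (tendsto_sq_mul_log_one_div_rpow_nhdsGT_zero s).const_mul c
  have hlim : Tendsto f (𝓝[>] 0) (𝓝 x) := tendsto_iff_norm_sub_tendsto_zero.mpr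
    (squeeze_zero' (.of_forall fun _ => norm_nonneg _) hx hbound)
  exact le_of_tendsto hlim.norm (eventually_mem_nhdsWithin.mono hf)

end Asymptotics

section Expansion

open scoped Matrix.Norms.Operator

theorem isBigO_kappa_sub_driftValue {T : Type*} [Fintype T] [DecidableEq T]
    {P : ℕ → ℝ → Matrix T T ℝ} {Pt Pt1 : Matrix T T ℝ} {α δ c s : ℝ} (hα : 0 < α) (hδ : 0 < δ)
    (hc : 0 ≤ c) (hP : ∀ k, 1 ≤ k → ∀ ε, 0 < ε → ‖P k ε‖ ≤ 1)
    (hexp : ∀ᶠ ε in 𝓝[>] (0 : ℝ), ∀ i : ℕ, 1 ≤ i → (i : ℝ) ≤ Real.log (1 / ε) ^ (1 + δ) →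
      ‖P i ε - (Pt + (ε * ((i : ℝ) - 1)) • Pt1)‖ ≤ c * ε ^ 2 * Real.log (1 / ε) ^ s)
    (μ r : T → ℝ) :
    (fun ε => kappa α μ r (fun k => P k ε) - μ ⬝ᵥ driftValue (Real.exp (-α)) Pt Pt1 r ε 0)
      =O[𝓝[>] 0] fun ε => ε ^ 2 * Real.log (1 / ε) ^ (max s (1 + δ) + (1 + δ)) := by
  have hPt : ‖Pt‖ ≤ 1 := norm_le_of_eventually_norm_sub_le (hP 1 le_rfl) (by
    filter_upwards [hexp, tendsto_log_one_div_nhdsGT_zero.eventually_ge_atTop 1] with ε hε hL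
    simpa using hε 1 le_rfl (by simpa using Real.one_le_rpow hL (by positivity)))
  obtain ⟨D, hD, hκ⟩ := exists_abs_kappa_sub_driftValue_le Pt1 r hα hPt μ
  refine .of_bound (D * (c + 1 + Real.exp α)) ?_
  filter_upwards [self_mem_nhdsWithin, Ioo_mem_nhdsGT one_pos, hexp,
    eventually_exp_neg_pow_floor_le hα hδ,
    tendsto_log_one_div_nhdsGT_zero.eventually_ge_atTop 1] with ε hε0 hε1 hPε hdisc hL
  set L := Real.log (1 / ε)
  set w := max s (1 + δ) + (1 + δ)
  set m := L ^ (1 + δ)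
  have hL0 : 0 < L := one_pos.trans_le hL
  have hm : 1 ≤ m := Real.one_le_rpow hL (by positivity)
  have hLs : L ^ s * m ≤ L ^ w := by
    rw [← Real.rpow_add hL0]
    exact Real.rpow_le_rpow_of_exponent_le hL (add_le_add_left (le_max_left _ _) _)
  have hm2 : m ^ 2 ≤ L ^ w := by
    rw [pow_two, ← Real.rpow_add hL0]
    exact Real.rpow_le_rpow_of_exponent_le hL (add_le_add_left (le_max_right _ _) _)
  have hmw : m ≤ L ^ w := (le_self_pow₀ hm two_ne_zero).trans hm2
  rw [Real.norm_eq_abs, Real.norm_of_nonneg (by positivity)]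
  calc _ ≤ D * (c * ε ^ 2 * L ^ s * m + ε ^ 2 * m ^ 2 + Real.exp (-α) ^ ⌊m⌋₊ * m) :=
        hκ _ ε m _ (fun k hk => hP k hk ε hε0) hε1.1.le hε1.2.le hm hPε
    _ ≤ D * (c * ε ^ 2 * L ^ s * m + ε ^ 2 * m ^ 2 + Real.exp α * ε ^ 2 * m) := by gcongr
    _ = D * (c * ε ^ 2 * (L ^ s * m) + ε ^ 2 * m ^ 2 + Real.exp α * ε ^ 2 * m) := by ring
    _ ≤ D * (c * ε ^ 2 * L ^ w + ε ^ 2 * L ^ w + Real.exp α * ε ^ 2 * L ^ w) := by gcongr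
    _ = D * (c + 1 + Real.exp α) * (ε ^ 2 * L ^ w) := by ring

theorem discounted_reward_first_order_linear_drift_general
    {S : Type*} [Fintype S] [DecidableEq S]
    (P : ℕ → ℝ → Matrix S S ℝ) (a : ℕ → ℝ) (Pt Pt1 : Matrix S S ℝ)
    (s δ : ℝ) (hδ : 0 < δ)
    (ha : ∀ i : ℕ, 1 ≤ i → a i = (i : ℝ) - 1)
    (hP : ∀ k : ℕ, 1 ≤ k → ∀ ε : ℝ, 0 < ε → matNorm (P k ε) ≤ 1)
    (hi : ∃ c > (0:ℝ), ∃ ε₀ > (0:ℝ), ∀ ε : ℝ, 0 < ε → ε < ε₀ →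
      ∀ i : ℕ, 1 ≤ i → (i : ℝ) ≤ Real.log (1/ε) ^ (1 + δ) →
        matNorm (P i ε - (Pt + (ε * a i) • Pt1)) ≤ c * ε ^ 2 * Real.log (1/ε) ^ s)
    (α : ℝ) (hα : 0 < α) (μ r : S → ℝ) :
    ∃ w : ℝ, ∃ c > (0:ℝ), ∃ ε₁ > (0:ℝ), ∀ ε : ℝ, 0 < ε → ε < ε₁ →
      |kappa α μ r (fun k => P k ε) -
          (μ ⬝ᵥ ((1 - Real.exp (-α) • Pt)⁻¹ *ᵥ r) +
            ε * Real.exp (-(2 * α)) *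
              (μ ⬝ᵥ ((Pt * ((1 - Real.exp (-α) • Pt)⁻¹) ^ 2 * Pt1 *
                  (1 - Real.exp (-α) • Pt)⁻¹) *ᵥ r)))|
        ≤ c * ε ^ 2 * Real.log (1/ε) ^ w := by
  obtain ⟨c, hc, ε₀, hε₀, hbound⟩ := hi
  simp only [matNorm_eq_norm] at hP hbound
  have hexp : ∀ᶠ ε in 𝓝[>] (0 : ℝ), ∀ i : ℕ, 1 ≤ i → (i : ℝ) ≤ Real.log (1 / ε) ^ (1 + δ) →
      ‖P i ε - (Pt + (ε * ((i : ℝ) - 1)) • Pt1)‖ ≤ c * ε ^ 2 * Real.log (1 / ε) ^ s := by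
    filter_upwards [Ioo_mem_nhdsGT hε₀] with ε hε i hi hiL
    simpa only [ha i hi] using hbound ε hε.1 hε.2 i hi hiL
  obtain ⟨K, hK, hO⟩ := (isBigO_kappa_sub_driftValue hα hδ hc.le hP hexp μ r).exists_pos
  obtain ⟨ε₁, hε₁, hle⟩ := (nhdsGT_basis 0).eventually_iff.mp
    (hO.bound.and (tendsto_log_one_div_nhdsGT_zero.eventually_ge_atTop 0))
  refine ⟨max s (1 + δ) + (1 + δ), K, hK, ε₁, hε₁, fun ε hε0 hε1 => ?_⟩
  obtain ⟨hκ, hL⟩ := hle ⟨hε0, hε1⟩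
  rw [dotProduct_driftValue_zero, Real.norm_eq_abs, Real.norm_of_nonneg (by positivity),
    ← mul_assoc, ← Real.exp_nat_mul, Nat.cast_two, mul_neg] at hκ
  exact hκ

end Expansion

/-- Under Assumption 1 with a_{i1} = i − 1, there exists w < ∞ such that
κ(ε) = μ(I − e^{−α}P̃)⁻¹ r + ε e^{−2α} μ P̃ (I − e^{−α}P̃)⁻² P̃⁽¹⁾ (I − e^{−α}P̃)⁻¹ r
        + O(ε²(log(1/ε))^w) as ε ↓ 0. -/
theorem discounted_reward_first_order_linear_drift
    {S : Type*} [Fintype S] [Nonempty S] [DecidableEq S]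
    (P : ℕ → ℝ → Matrix S S ℝ) (a : ℕ → ℝ) (Pt Pt1 : Matrix S S ℝ)
    (s δ p : ℝ) (hδ : 0 < δ) (hp : 0 < p)
    (ha : ∀ i : ℕ, 1 ≤ i → a i = (i : ℝ) - 1)
    (hstoch : ∀ k : ℕ, 1 ≤ k → ∀ ε : ℝ, 0 < ε → IsStochastic (P k ε))
    (hi : ∃ c > (0:ℝ), ∃ ε₀ > (0:ℝ), ∀ ε : ℝ, 0 < ε → ε < ε₀ →
      ∀ i : ℕ, 1 ≤ i → (i : ℝ) ≤ Real.log (1/ε) ^ (1 + δ) →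
        matNorm (P i ε - (Pt + (ε * a i) • Pt1)) ≤ c * ε ^ 2 * Real.log (1/ε) ^ s)
    (hii : ∃ c > (0:ℝ), ∃ i₀ : ℕ, ∀ i : ℕ, i₀ ≤ i → |a i| ≤ c * (i : ℝ) ^ p)
    (α : ℝ) (hα : 0 < α)
    (μ r : S → ℝ) (hμ0 : ∀ x, 0 ≤ μ x) (hμ1 : ∑ x, μ x = 1) :
    ∃ w : ℝ, ∃ c > (0:ℝ), ∃ ε₁ > (0:ℝ), ∀ ε : ℝ, 0 < ε → ε < ε₁ →
      |kappa α μ r (fun k => P k ε) -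
          (μ ⬝ᵥ ((1 - Real.exp (-α) • Pt)⁻¹ *ᵥ r) +
            ε * Real.exp (-(2 * α)) *
              (μ ⬝ᵥ ((Pt * ((1 - Real.exp (-α) • Pt)⁻¹) ^ 2 * Pt1 *
                  (1 - Real.exp (-α) • Pt)⁻¹) *ᵥ r)))|
        ≤ c * ε ^ 2 * Real.log (1/ε) ^ w := by
  exact discounted_reward_first_order_linear_drift_general P a Pt Pt1 s δ hδ ha
    (fun k hk ε hε => (hstoch k hk ε hε).matNorm_le_one) hi α hα μ r
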